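/- Let X ⊆ ℝ^d, let p be an unnormalized probability density function on X with normalization constant Z = ∫ p(x) dx satisfying 0 < Z ≤ 1, and let P be the probability distribution on X with density p/Z. Fix i ∈ {1,…,d}, and assume the marginal function F_i(t) = ∫ 1[x_i ≤ t]·p(x) dx is continuous in t. Let α : X → [0,1] be measurable and define g(t) = ∫ α(x)·1[x_i ≤ t]·p(x) dx. Let x⁽¹⁾,…,x⁽ⁿ⁾ be i.i.d. samples from P and define the empirical estimate ĝ(t) = (Z/n)·Σ_{k=1}^n α(x⁽ᵏ⁾)·1[x_i⁽ᵏ⁾ ≤ t]. Then for any n ≥ 3, the probability (over the samples) that sup_{t ∈ ℝ} |g(t) − ĝ(t)| ≥ 4·(log n)/√n is at most 2/n^{3/2}. -/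

import Mathlib

open MeasureTheory

lemma hoeff_one {E : Type*} [MeasurableSpace E] (P : Measure E) [IsProbabilityMeasure P]
    (f : E → ℝ) (hf : Measurable f) (a : ℝ) (hr : ∀ x, f x ∈ Set.Icc a (a + 1))
    (n : ℕ) (ε : ℝ) (hε : 0 ≤ ε) :
    (Measure.pi fun _ : Fin n => P) {ω | ε ≤ ∑ k : Fin n, (f (ω k) - ∫ x, f x ∂P)}
      ≤ ENNReal.ofReal (Real.exp (-(2 * ε ^ 2 / n))) := by
  have hind : ProbabilityTheory.iIndepFun
      (fun (k : Fin n) (ω : Fin n → E) => f (ω k) - ∫ x, f x ∂P)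
      (Measure.pi fun _ : Fin n => P) :=
    ProbabilityTheory.iIndepFun_pi (X := fun _ x => f x - ∫ x, f x ∂P)
      (fun _ => (hf.sub_const _).aemeasurable)
  have hsub : ∀ k ∈ (Finset.univ : Finset (Fin n)), ProbabilityTheory.HasSubgaussianMGF
      (fun (ω : Fin n → E) => f (ω k) - ∫ x, f x ∂P)
      ((‖(a + 1) - a‖₊ / 2) ^ 2) (Measure.pi fun _ : Fin n => P) := by
    intro k _
    have h := ProbabilityTheory.hasSubgaussianMGF_of_mem_Icc
      (μ := (Measure.pi fun _ : Fin n => P)) (X := fun ω => f (ω k)) (a := a) (b := a + 1)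
      (hf.comp (measurable_pi_apply k)).aemeasurable (Filter.Eventually.of_forall fun ω => hr _)
    have e := integral_comp_eval (μ := fun _ : Fin n => P) (i := k) hf.aestronglyMeasurable
    rw [e] at h
    exact h
  have h := ProbabilityTheory.HasSubgaussianMGF.measure_sum_ge_le_of_iIndepFun hind hsub hε
  rw [ENNReal.le_ofReal_iff_toReal_le (measure_ne_top _ _) (Real.exp_nonneg _)]
  refine h.trans (le_of_eq ?_)
  congr 1
  rcases Nat.eq_zero_or_pos n with h0 | h0
  · subst h0; simp
  · have : (n : ℝ) ≠ 0 := by positivity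
    simp
    field_simp

lemma hoeff_two {E : Type*} [MeasurableSpace E] (P : Measure E) [IsProbabilityMeasure P]
    (f : E → ℝ) (hf : Measurable f) (hr : ∀ x, f x ∈ Set.Icc (0:ℝ) 1)
    (n : ℕ) (ε : ℝ) (hε : 0 ≤ ε) :
    (Measure.pi fun _ : Fin n => P) {ω | ε ≤ |∑ k : Fin n, f (ω k) - n * ∫ x, f x ∂P|}
      ≤ ENNReal.ofReal (2 * Real.exp (-(2 * ε ^ 2 / n))) := by
  have h1 := hoeff_one P f hf 0 (by simpa using hr) n ε hε
  have h2 := hoeff_one P (fun x => - f x) hf.neg (-1)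
    (fun x => by have := hr x; simp only [Set.mem_Icc] at *; constructor <;> linarith) n ε hε
  rw [two_mul, ENNReal.ofReal_add (Real.exp_nonneg _) (Real.exp_nonneg _)]
  refine le_trans (measure_mono ?_) ((measure_union_le _ _).trans (add_le_add h1 h2))
  intro ω hω
  simp only [Set.mem_setOf_eq, Set.mem_union, Finset.sum_sub_distrib, integral_neg,
    Finset.sum_neg_distrib, Finset.sum_const, Finset.card_univ, Fintype.card_fin,
    nsmul_eq_mul] at hω ⊢
  rcases le_abs.1 hω with h | h
  · left; exact h
  · right; linarith

/-- indicator of the half space with extended threshold -/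
noncomputable def hind {d : ℕ} (i : Fin d) (s : EReal) (x : Fin d → ℝ) : ℝ :=
  if ((x i : ℝ) : EReal) ≤ s then 1 else 0

lemma hind_meas {d : ℕ} (i : Fin d) (s : EReal) : Measurable (hind i s) := by
  unfold hind
  refine Measurable.ite ?_ measurable_const measurable_const
  exact measurableSet_le (measurable_coe_real_ereal.comp (measurable_pi_apply i)) measurable_const

lemma hind_range {d : ℕ} (i : Fin d) (s : EReal) (x) : hind i s x ∈ Set.Icc (0:ℝ) 1 := by
  unfold hind; split_ifs <;> simp

lemma hind_mono {d : ℕ} (i : Fin d) {s s' : EReal} (h : s ≤ s') (x) :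
    hind i s x ≤ hind i s' x := by
  unfold hind
  split_ifs with h1 h2
  · simp
  · exact absurd (h1.trans h) h2
  · simp
  · simp

lemma int_of_Icc {E : Type*} [MeasurableSpace E] (P : Measure E) [IsProbabilityMeasure P]
    (f : E → ℝ) (hf : Measurable f) (hr : ∀ x, f x ∈ Set.Icc (0:ℝ) 1) : Integrable f P :=
  Integrable.of_mem_Icc 0 1 hf.aemeasurable (Filter.Eventually.of_forall hr)

lemma num_bound (n : ℕ) (hn : 3 ≤ n) :
    ((n : ℝ) + 1) * (2 * Real.exp (-(2 * (3 * Real.log n * Real.sqrt n) ^ 2 / n)))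
      ≤ 2 / (n : ℝ) ^ ((3:ℝ)/2) := by
  have hn3 : (3:ℝ) ≤ n := by exact_mod_cast hn
  have hn0 : (0:ℝ) < n := by linarith
  have hL : 1 ≤ Real.log n := by
    rw [Real.le_log_iff_exp_le hn0]
    linarith [Real.exp_one_lt_d9]
  have e1 : 2 * (3 * Real.log n * Real.sqrt n) ^ 2 / n = 18 * Real.log n ^ 2 := by
    rw [mul_pow, Real.sq_sqrt hn0.le]; field_simp; norm_num
  rw [e1, Real.rpow_def_of_pos hn0]
  have hexp : Real.exp (Real.log n) = n := Real.exp_log hn0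
  have h2 : (n:ℝ) + 1 ≤ Real.exp (Real.log n * 2) := by
    rw [mul_comm, two_mul, Real.exp_add, hexp]; nlinarith
  rw [div_eq_mul_inv, ← Real.exp_neg]
  calc ((n : ℝ) + 1) * (2 * Real.exp (-(18 * Real.log n ^ 2)))
      ≤ Real.exp (Real.log n * 2) * (2 * Real.exp (-(18 * Real.log n ^ 2))) := by gcongr
    _ = 2 * Real.exp (Real.log n * 2 + -(18 * Real.log n ^ 2)) := by rw [Real.exp_add]; ring
    _ ≤ _ := by
      gcongr
      nlinarith

lemma exists_tau {d : ℕ} (P : Measure (Fin d → ℝ)) [IsProbabilityMeasure P] (i : Fin d)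
    (hc : Continuous fun t : ℝ => ∫ x, hind i (t : EReal) x ∂P) (n : ℕ) (hn : 0 < n) :
    ∃ τ : ℕ → EReal, τ 0 = ⊥ ∧ τ n = ⊤ ∧ ∀ j ≤ n, ∫ x, hind i (τ j) x ∂P = (j : ℝ) / n := by
  have hm : Measurable (fun x : Fin d → ℝ => x i) := measurable_pi_apply i
  haveI : IsProbabilityMeasure (P.map (fun x : Fin d → ℝ => x i)) :=
    Measure.isProbabilityMeasure_map hm.aemeasurable
  have hcdf : ∀ t : ℝ, ∫ x, hind i (t : EReal) x ∂P
      = ProbabilityTheory.cdf (P.map (fun x : Fin d → ℝ => x i)) t := by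
    intro t
    rw [ProbabilityTheory.cdf_eq_real, map_measureReal_apply hm measurableSet_Iic,
      ← integral_indicator_one (hm measurableSet_Iic)]
    congr 1
    ext x
    simp [hind, Set.indicator]
  have hex : ∀ j : ℕ, 0 < j → j < n → ∃ t : ℝ, ∫ x, hind i (t : EReal) x ∂P = (j : ℝ) / n := by
    intro j h0 h1
    have hn' : (0:ℝ) < n := by exact_mod_cast hn
    have hj0 : (0:ℝ) < (j:ℝ) / n := by positivity
    have hj1 : (j:ℝ) / n < 1 := by rw [div_lt_one hn']; exact_mod_cast h1
    apply mem_range_of_exists_le_of_exists_ge hc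
    · obtain ⟨a, ha⟩ := ((ProbabilityTheory.tendsto_cdf_atBot
        (P.map (fun x : Fin d → ℝ => x i))).eventually_lt_const hj0).exists
      exact ⟨a, by simpa [hcdf] using ha.le⟩
    · obtain ⟨a, ha⟩ := ((ProbabilityTheory.tendsto_cdf_atTop
        (P.map (fun x : Fin d → ℝ => x i))).eventually_const_lt hj1).exists
      exact ⟨a, by simpa [hcdf] using ha.le⟩
  choose! T hT using hex
  refine ⟨fun j => if j = 0 then ⊥ else if j = n then ⊤ else (T j : EReal), by simp,
    by simp [hn.ne'], ?_⟩
  intro j hj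
  have hn' : (n:ℝ) ≠ 0 := by exact_mod_cast hn.ne'
  by_cases h0 : j = 0
  · subst h0; simp [hind]
  by_cases h1 : j = n
  · subst h1; simp [hind, h0]
  · simp only [h0, h1, if_false]
    exact hT j (Nat.pos_of_ne_zero h0) (lt_of_le_of_ne hj h1)

/-- bound on the estimation error. With `n ≥ 3` i.i.d. samples from the
distribution `P` with density `p/Z`, the empirical estimate `ĝ` of
`g(t) = ∫ α(x)·1[xᵢ ≤ t]·p(x) dx` satisfies
`sup_t |g(t) − ĝ(t)| ≥ 4 log n / √n` with probability at most `2 / n^{3/2}`. -/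
theorem stmt_2 (d : ℕ) (X : Set (Fin d → ℝ)) (hX : MeasurableSet X)
    (p : (Fin d → ℝ) → ℝ) (hp_meas : Measurable p)
    (hp_nn : ∀ x ∈ X, 0 ≤ p x) (hp_int : IntegrableOn p X)
    (Z : ℝ) (hZ : Z = ∫ x in X, p x) (hZ_pos : 0 < Z) (hZ_le : Z ≤ 1)
    (P : Measure (Fin d → ℝ))
    (hP : P = volume.withDensity fun x => ENNReal.ofReal (X.indicator p x / Z))
    [IsProbabilityMeasure P]
    (i : Fin d)
    (hF_cont : Continuous fun t => ∫ x in X, (if x i ≤ t then (1:ℝ) else 0) * p x)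
    (α : (Fin d → ℝ) → ℝ) (hα_meas : Measurable α)
    (hα_range : ∀ x, α x ∈ Set.Icc (0:ℝ) 1)
    (g : ℝ → ℝ)
    (hg : ∀ t, g t = ∫ x in X, α x * (if x i ≤ t then (1:ℝ) else 0) * p x)
    (n : ℕ) (hn : 3 ≤ n)
    (ghat : (Fin n → (Fin d → ℝ)) → ℝ → ℝ)
    (hghat : ∀ ω t, ghat ω t
      = (Z / n) * ∑ k : Fin n, α (ω k) * (if ω k i ≤ t then (1:ℝ) else 0)) :
    (Measure.pi fun _ : Fin n => P)
        {ω | 4 * Real.log n / Real.sqrt n ≤ ⨆ t : ℝ, |g t - ghat ω t|}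
      ≤ ENNReal.ofReal (2 / (n : ℝ) ^ ((3:ℝ)/2)) := by
  have hn3 : (3:ℝ) ≤ n := by exact_mod_cast hn
  have hn0 : (0:ℝ) < n := by linarith
  have hL : 1 ≤ Real.log n := by
    rw [Real.le_log_iff_exp_le hn0]
    linarith [Real.exp_one_lt_d9]
  have hint : ∀ h : (Fin d → ℝ) → ℝ, ∫ x in X, h x * p x = Z * ∫ x, h x ∂P := by
    intro h
    rw [hP, integral_withDensity_eq_integral_toReal_smul
      (((hp_meas.indicator hX).div_const Z).ennreal_ofReal)
      (Filter.Eventually.of_forall fun _ => ENNReal.ofReal_lt_top),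
      ← integral_const_mul, ← integral_indicator hX]
    congr 1
    ext x
    by_cases hx : x ∈ X
    · have := hp_nn x hx
      simp only [Set.indicator_of_mem hx, smul_eq_mul]
      rw [ENNReal.toReal_ofReal (by positivity)]
      field_simp
    · simp [Set.indicator_of_notMem hx]
  have hc : Continuous fun t : ℝ => ∫ x, hind i (t : EReal) x ∂P := by
    have : (fun t : ℝ => ∫ x, hind i (t : EReal) x ∂P) =
        fun t => Z⁻¹ * ∫ x in X, (if x i ≤ t then (1:ℝ) else 0) * p x := by
      ext t
      rw [hint, inv_mul_cancel_left₀ hZ_pos.ne']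
      simp [hind]
    rw [this]
    exact continuous_const.mul hF_cont
  obtain ⟨τ, hτ0, hτn, hτ⟩ := exists_tau P i hc n (by omega)
  set A : EReal → (Fin d → ℝ) → ℝ := fun s x => α x * hind i s x with hA
  have hAm : ∀ s, Measurable (A s) := fun s => hα_meas.mul (hind_meas i s)
  have hAr : ∀ s x, A s x ∈ Set.Icc (0:ℝ) 1 := fun s x =>
    ⟨mul_nonneg (hα_range x).1 (hind_range i s x).1,
      mul_le_one₀ (hα_range x).2 (hind_range i s x).1 (hind_range i s x).2⟩
  have hAi : ∀ s, Integrable (A s) P := fun s => int_of_Icc P _ (hAm s) (hAr s)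
  have hHi : ∀ s, Integrable (hind i s) P :=
    fun s => int_of_Icc P _ (hind_meas i s) (hind_range i s)
  have hAmono : ∀ {s s' : EReal}, s ≤ s' → ∀ x, A s x ≤ A s' x := fun h x =>
    mul_le_mul_of_nonneg_left (hind_mono i h x) (hα_range x).1
  have hGmono : ∀ {s s' : EReal}, s ≤ s' → ∫ x, A s x ∂P ≤ ∫ x, A s' x ∂P := fun h =>
    integral_mono (hAi _) (hAi _) (hAmono h)
  have hGdiff : ∀ {s s' : EReal}, s ≤ s' → ∫ x, A s' x ∂P - ∫ x, A s x ∂P ≤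
      ∫ x, hind i s' x ∂P - ∫ x, hind i s x ∂P := by
    intro s s' h
    rw [← integral_sub (hAi _) (hAi _), ← integral_sub (hHi _) (hHi _)]
    refine integral_mono ((hAi _).sub (hAi _)) ((hHi _).sub (hHi _)) fun x => ?_
    have h1 := hind_mono i h x
    have h2 := (hα_range x).2
    simp only [hA]
    nlinarith
  set ε : ℝ := 3 * Real.log n * Real.sqrt n with hε
  have hsq : 1 ≤ Real.sqrt n := Real.one_le_sqrt.2 (by linarith)
  have hε0 : 0 ≤ ε := by positivity
  have hsub : {ω | 4 * Real.log n / Real.sqrt n ≤ ⨆ t : ℝ, |g t - ghat ω t|} ⊆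
      ⋃ j ∈ Finset.range (n + 1),
        {ω : Fin n → (Fin d → ℝ) | ε ≤ |∑ k, A (τ j) (ω k) - n * ∫ x, A (τ j) x ∂P|} := by
    intro ω hω
    by_contra hcon
    simp only [Set.mem_iUnion, Finset.mem_range, Set.mem_setOf_eq, not_exists, not_le] at hcon
    simp only [Set.mem_setOf_eq] at hω
    have key : ∀ t : ℝ, |g t - ghat ω t| ≤ (ε + 1) / n := by
      intro t
      have hj : ∃ j, j < n ∧ τ j ≤ (t : EReal) ∧ (t : EReal) ≤ τ (j + 1) := by
        by_contra hno
        push Not at hno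
        have : ∀ j ≤ n, τ j ≤ (t : EReal) := by
          intro j
          induction j with
          | zero => intro _; rw [hτ0]; exact bot_le
          | succ j ih => intro hj; exact (hno j (by omega) (ih (by omega))).le
        have h := this n le_rfl
        rw [hτn] at h
        exact absurd h (not_le.2 (EReal.coe_lt_top t))
      obtain ⟨j, hjn, hj1, hj2⟩ := hj
      have b1 := abs_lt.1 (hcon j (by omega))
      have b2 := abs_lt.1 (hcon (j + 1) (by omega))
      have s1 : ∑ k, A (τ j) (ω k) ≤ ∑ k, A t (ω k) :=
        Finset.sum_le_sum fun k _ => hAmono hj1 _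
      have s2 : ∑ k, A t (ω k) ≤ ∑ k, A (τ (j+1)) (ω k) :=
        Finset.sum_le_sum fun k _ => hAmono hj2 _
      have g1 := mul_le_mul_of_nonneg_left (hGmono hj1) hn0.le
      have g2 := mul_le_mul_of_nonneg_left (hGmono hj2) hn0.le
      have g3 := mul_le_mul_of_nonneg_left (hGdiff (hj1.trans hj2)) hn0.le
      rw [hτ (j+1) (by omega), hτ j (by omega)] at g3
      have g4 : (n:ℝ) * (((j + 1 : ℕ) : ℝ) / n - (j : ℝ) / n) = 1 := by
        push_cast; field_simp; ring
      rw [g4, mul_sub] at g3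
      have habs : |n * ∫ x, A t x ∂P - ∑ k, A t (ω k)| ≤ ε + 1 := by
        rw [abs_le]; constructor <;> linarith
      have e : g t - ghat ω t = (Z / n) * (n * ∫ x, A t x ∂P - ∑ k, A t (ω k)) := by
        rw [hg, hghat, hint]
        simp only [hA, hind, EReal.coe_le_coe_iff]
        field_simp
      rw [e, abs_mul, abs_of_pos (by positivity), div_mul_eq_mul_div]
      gcongr
      nlinarith [abs_nonneg (n * ∫ x, A t x ∂P - ∑ k, A t (ω k))]
    have hle := hω.trans (ciSup_le key)
    rw [div_le_div_iff₀ (by positivity) hn0] at hle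
    have hs2 : Real.sqrt n * Real.sqrt n = n := Real.mul_self_sqrt hn0.le
    have hlt : (ε + 1) * Real.sqrt n < 4 * Real.log n * n := by
      have h3 : Real.sqrt n < n := by nlinarith
      have : (ε + 1) * Real.sqrt n = 3 * Real.log n * n + Real.sqrt n := by
        rw [hε]; linear_combination (3 * Real.log n) * hs2
      rw [this]; nlinarith
    linarith
  refine (measure_mono hsub).trans ((measure_biUnion_finset_le _ _).trans ?_)
  refine (Finset.sum_le_sum fun j _ => hoeff_two P (A (τ j)) (hAm _) (hAr _) n ε hε0).trans ?_
  rw [Finset.sum_const, Finset.card_range, nsmul_eq_mul, ← ENNReal.ofReal_natCast,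
    ← ENNReal.ofReal_mul (by positivity)]
  apply ENNReal.ofReal_le_ofReal
  push_cast
  exact num_bound n hn
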